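/- arXiv:math/0507156 — 3 statements merged into one kernel-verified Lean document; each statement's English description precedes it below -/
import Mathlib

section
/- For every integer m ≥ 3 one has f_m(1) > 1, and there is a unique γ_m ∈ (0,1) with f_m(γ_m) = 1; moreover 1/2 < γ_{m+1} < γ_m for every m ≥ 3 (the sequence (γ_m)_{m≥3} is strictly decreasing and bounded below by 1/2), and γ_m → 1/2 as m → ∞. -/
open scoped BigOperators

/-- `fm m t = ∑_{k=1}^{m-1} t^k * cos (π / (⌊(m-1)/k⌋ + 2))`, where `(m-1)/k` is the
integer part of `(m-1)/k` (natural number division). -/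
noncomputable def fm (m : ℕ) (t : ℝ) : ℝ :=
  ∑ k ∈ Finset.Icc 1 (m - 1), t ^ k * Real.cos (Real.pi / (((m - 1) / k + 2 : ℕ) : ℝ))

/-!
For `1 ≤ k < m` the coefficient of `t ^ k` in `f_m` lies in `[1/2, 1]`, increases with `m` and
tends to `1`. Hence `f_m` is strictly increasing on `[0, ∞)`, increases with `m`, and tends
coefficientwise to the geometric series `∑_{k ≥ 1} t ^ k`, which takes the value `1` at `t = 1/2`.
So the root `γ_m` exists and is unique, decreases with `m`, stays above `1/2`, and cannot stay
above any `t > 1/2`.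
-/

open Filter Finset Topology

section General

lemma monotoneOn_cos_pi_div : MonotoneOn (fun x : ℝ ↦ Real.cos (Real.pi / x)) (Set.Ici 1) := by
  intro x hx y _ hxy
  have hx₀ : 0 < x := zero_lt_one.trans_le hx
  have hy₀ : 0 < y := hx₀.trans_le hxy
  exact Real.cos_le_cos_of_nonneg_of_le_pi (by positivity) (div_le_self Real.pi_pos.le hx)
    (by gcongr)

lemma strictMonoOn_sum_pow_mul {R : Type*} [Semiring R] [LinearOrder R] [IsStrictOrderedRing R]
    {s : Finset ℕ} {c : ℕ → R} (hs : s.Nonempty) (hs₀ : 0 ∉ s) (hc : ∀ k ∈ s, 0 < c k) :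
    StrictMonoOn (fun t ↦ ∑ k ∈ s, t ^ k * c k) (Set.Ici 0) := by
  intro t ht u _ htu
  refine sum_lt_sum_of_nonempty hs fun k hk ↦ ?_
  have hk₀ : k ≠ 0 := ne_of_mem_of_not_mem hk hs₀
  exact mul_lt_mul_of_pos_right (pow_lt_pow_left₀ htu ht hk₀) (hc k hk)

lemma sum_Icc_one_half_pow (n : ℕ) : ∑ k ∈ Icc 1 n, (1 / 2 : ℝ) ^ k = 1 - (1 / 2) ^ n := by
  rw [← Ico_add_one_right_eq_Icc, geom_sum_Ico (by norm_num) (by omega)]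
  ring

lemma eventually_one_lt_sum_Icc_pow {t : ℝ} (ht : 1 / 2 < t) :
    ∀ᶠ n in atTop, 1 < ∑ k ∈ Icc 1 n, t ^ k := by
  have h_small : ∀ᶠ n : ℕ in atTop, (1 / 2 : ℝ) ^ n < t - 1 / 2 :=
    (tendsto_pow_atTop_nhds_zero_of_lt_one (by norm_num) (by norm_num)).eventually_lt_const
      (sub_pos.2 ht)
  filter_upwards [h_small, eventually_ge_atTop 1] with n hn hn₁
  -- The `k = 1` term alone gains `t - 1/2` over the sum at `1/2`, which falls short of `1`
  -- by `(1/2) ^ n`.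
  have h_gain : t - 1 / 2 ≤ ∑ k ∈ Icc 1 n, (t ^ k - (1 / 2) ^ k) := by
    have h_nonneg : ∀ k ∈ Icc 1 n, 0 ≤ t ^ k - (1 / 2) ^ k := fun k _ ↦
      sub_nonneg.2 (pow_le_pow_left₀ (by norm_num) ht.le k)
    simpa only [pow_one] using single_le_sum h_nonneg (left_mem_Icc.2 hn₁)
  rw [sum_sub_distrib, sum_Icc_one_half_pow] at h_gain
  linarith

lemma tendsto_of_monotoneOn_of_eventually_lt {ι α β : Type*} [LinearOrder α]
    [TopologicalSpace α] [OrderTopology α] [Preorder β] {l : Filter ι} {s : Set α}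
    {f : ι → α → β} {x : ι → α} {a : α} (hf : ∀ᶠ i in l, MonotoneOn (f i) s)
    (hx : ∀ᶠ i in l, x i ∈ s) (hs : Set.Ici a ⊆ s) (h_lower : ∀ᶠ i in l, f i a < f i (x i))
    (h_upper : ∀ b > a, ∀ᶠ i in l, f i (x i) < f i b) : Tendsto x l (𝓝 a) := by
  refine tendsto_order.2 ⟨fun b hb ↦ ?_, fun b hb ↦ ?_⟩
  · filter_upwards [hf, hx, h_lower] with i hfi hxi hlt
    exact hb.trans (hfi.reflect_lt (hs Set.self_mem_Ici) hxi hlt)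
  · filter_upwards [hf, hx, h_upper b hb] with i hfi hxi hlt
    exact hfi.reflect_lt hxi (hs hb.le) hlt

end General

/-- The coefficient of `t ^ k` in `fm m t`, for `1 ≤ k ≤ m - 1`. It is also defined for other `k`:
it vanishes for `k ≥ m`, and at `k = 0` because `(m - 1) / 0 = 0`. -/
noncomputable def fmCoeff (m k : ℕ) : ℝ :=
  Real.cos (Real.pi / (((m - 1) / k + 2 : ℕ) : ℝ))

section Coefficients

variable {m k : ℕ}

lemma fmCoeff_le_one (m k : ℕ) : fmCoeff m k ≤ 1 :=
  Real.cos_le_one _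

lemma cos_pi_div_le_fmCoeff {q : ℕ} (hq : 1 ≤ q) (hqk : q ≤ (m - 1) / k + 2) :
    Real.cos (Real.pi / q) ≤ fmCoeff m k :=
  monotoneOn_cos_pi_div (Set.mem_Ici.2 (mod_cast hq)) (Set.mem_Ici.2 (mod_cast hq.trans hqk))
    (mod_cast hqk)

lemma fmCoeff_nonneg (m k : ℕ) : 0 ≤ fmCoeff m k := by
  simpa using cos_pi_div_le_fmCoeff (q := 2) one_le_two (Nat.le_add_left 2 ((m - 1) / k))

lemma half_le_fmCoeff (hk : k ∈ Icc 1 (m - 1)) : 1 / 2 ≤ fmCoeff m k := by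
  obtain ⟨hk₁, hkm⟩ := mem_Icc.1 hk
  have h_floor : 1 ≤ (m - 1) / k := Nat.div_pos hkm hk₁
  simpa using cos_pi_div_le_fmCoeff (q := 3) (by norm_num) (by omega : 3 ≤ (m - 1) / k + 2)

lemma fmCoeff_pos (hk : k ∈ Icc 1 (m - 1)) : 0 < fmCoeff m k :=
  one_half_pos.trans_le (half_le_fmCoeff hk)

lemma monotone_fmCoeff (k : ℕ) : Monotone fun m ↦ fmCoeff m k := fun m n hmn ↦
  cos_pi_div_le_fmCoeff (Nat.succ_pos _) (by gcongr)

lemma tendsto_fmCoeff (hk : k ≠ 0) : Tendsto (fun m ↦ fmCoeff m k) atTop (𝓝 1) := by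
  have h_floor : Tendsto (fun m ↦ (m - 1) / k + 2) atTop atTop :=
    (tendsto_add_atTop_nat 2).comp
      ((Nat.tendsto_div_const_atTop hk).comp (tendsto_sub_atTop_nat 1))
  have h_cos : Tendsto (fun n : ℕ ↦ Real.cos (Real.pi / n)) atTop (𝓝 1) := by
    simpa only [Real.cos_zero, Function.comp_def] using (Real.continuous_cos.tendsto 0).comp
      (tendsto_const_div_atTop_nhds_zero_nat Real.pi)
  exact h_cos.comp h_floor

end Coefficients

section Polynomials

variable {m n : ℕ} {t : ℝ}

lemma fm_eq_sum_fmCoeff (m : ℕ) : fm m = fun t ↦ ∑ k ∈ Icc 1 (m - 1), t ^ k * fmCoeff m k :=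
  rfl

lemma continuous_fm (m : ℕ) : Continuous (fm m) := by
  rw [fm_eq_sum_fmCoeff]
  fun_prop

lemma fm_zero (m : ℕ) : fm m 0 = 0 := by
  rw [fm_eq_sum_fmCoeff]
  exact sum_eq_zero fun k hk ↦ by rw [zero_pow (by grind), zero_mul]

lemma strictMonoOn_fm (hm : 2 ≤ m) : StrictMonoOn (fm m) (Set.Ici 0) := by
  rw [fm_eq_sum_fmCoeff]
  exact strictMonoOn_sum_pow_mul (nonempty_Icc.2 (by omega)) (by simp) fun _ ↦ fmCoeff_pos

lemma sum_Icc_le_fm (hnm : n ≤ m - 1) (ht : 0 ≤ t) :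
    ∑ k ∈ Icc 1 n, t ^ k * fmCoeff m k ≤ fm m t := by
  rw [fm_eq_sum_fmCoeff]
  exact sum_le_sum_of_subset_of_nonneg (Icc_subset_Icc_right hnm) fun k _ _ ↦
    mul_nonneg (pow_nonneg ht k) (fmCoeff_nonneg m k)

lemma fm_lt_fm_of_lt (hm : 1 ≤ m) (hmn : m < n) (ht : 0 < t) : fm m t < fm n t := by
  have h_mem : m ∈ Icc 1 (n - 1) := mem_Icc.2 ⟨hm, by omega⟩
  rw [fm_eq_sum_fmCoeff, fm_eq_sum_fmCoeff]
  calc ∑ k ∈ Icc 1 (m - 1), t ^ k * fmCoeff m k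
      ≤ ∑ k ∈ Icc 1 (m - 1), t ^ k * fmCoeff n k :=
        sum_le_sum fun k _ ↦
          mul_le_mul_of_nonneg_left (monotone_fmCoeff k hmn.le) (pow_nonneg ht.le k)
    _ < ∑ k ∈ Icc 1 (n - 1), t ^ k * fmCoeff n k :=
        sum_lt_sum_of_subset (Icc_subset_Icc_right (by omega)) h_mem (by grind)
          (mul_pos (pow_pos ht m) (fmCoeff_pos h_mem))
          fun k _ _ ↦ mul_nonneg (pow_nonneg ht.le k) (fmCoeff_nonneg n k)

lemma one_lt_fm_one (hm : 3 ≤ m) : 1 < fm m 1 := by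
  have h_coeff_one : √2 / 2 ≤ fmCoeff m 1 := by
    simpa using cos_pi_div_le_fmCoeff (m := m) (k := 1) (q := 4) (by norm_num) (by grind)
  have h_coeff_two : 1 / 2 ≤ fmCoeff m 2 := half_le_fmCoeff (mem_Icc.2 (by omega))
  have h_sqrt : 1 < √2 := Real.one_lt_sqrt_two
  calc 1 < fmCoeff m 1 + fmCoeff m 2 := by linarith
    _ = ∑ k ∈ Icc 1 2, 1 ^ k * fmCoeff m k := by simp [sum_Icc_succ_top]
    _ ≤ fm m 1 := sum_Icc_le_fm (by omega) zero_le_one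

lemma fm_half_lt_one (m : ℕ) : fm m (1 / 2) < 1 := by
  rw [fm_eq_sum_fmCoeff]
  calc ∑ k ∈ Icc 1 (m - 1), (1 / 2) ^ k * fmCoeff m k
      ≤ ∑ k ∈ Icc 1 (m - 1), (1 / 2 : ℝ) ^ k :=
        sum_le_sum fun k _ ↦ mul_le_of_le_one_right (by positivity) (fmCoeff_le_one m k)
    _ = 1 - (1 / 2) ^ (m - 1) := sum_Icc_one_half_pow (m - 1)
    _ < 1 := sub_lt_self 1 (by positivity)

lemma eventually_one_lt_fm (ht : 1 / 2 < t) : ∀ᶠ m in atTop, 1 < fm m t := by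
  obtain ⟨n, hn⟩ := (eventually_one_lt_sum_Icc_pow ht).exists
  have h_lim : Tendsto (fun m ↦ ∑ k ∈ Icc 1 n, t ^ k * fmCoeff m k) atTop
      (𝓝 (∑ k ∈ Icc 1 n, t ^ k)) := by
    refine tendsto_finsetSum _ fun k hk ↦ ?_
    have hk₀ : k ≠ 0 := Nat.one_le_iff_ne_zero.1 (mem_Icc.1 hk).1
    simpa only [mul_one] using (tendsto_fmCoeff hk₀).const_mul (t ^ k)
  filter_upwards [h_lim.eventually_const_lt hn, eventually_ge_atTop (n + 1)] with m hm hnm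
  exact hm.trans_le (sum_Icc_le_fm (by omega) (by linarith))

end Polynomials

section Roots

variable {m n : ℕ} {s t : ℝ}

lemma existsUnique_fm_eq_one (hm : 3 ≤ m) : ∃! g : ℝ, g ∈ Set.Ioo (0 : ℝ) 1 ∧ fm m g = 1 := by
  have h_one_mem : (1 : ℝ) ∈ Set.Ioo (fm m 0) (fm m 1) :=
    ⟨(fm_zero m).trans_lt zero_lt_one, one_lt_fm_one hm⟩
  obtain ⟨g, hg, hg_root⟩ :=
    intermediate_value_Ioo zero_le_one (continuous_fm m).continuousOn h_one_mem
  refine ⟨g, ⟨hg, hg_root⟩, fun u ⟨hu, hu_root⟩ ↦ ?_⟩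
  exact (strictMonoOn_fm (by omega)).injOn hu.1.le hg.1.le (hu_root.trans hg_root.symm)

lemma half_lt_of_fm_eq_one (hm : 2 ≤ m) (ht : 0 ≤ t) (h_root : fm m t = 1) : 1 / 2 < t :=
  ((strictMonoOn_fm hm).lt_iff_lt (Set.mem_Ici.2 one_half_pos.le) ht).1 (h_root ▸ fm_half_lt_one m)

lemma lt_of_fm_eq_fm (hm : 1 ≤ m) (hmn : m < n) (hs : 0 ≤ s) (ht : 0 < t)
    (h : fm n s = fm m t) : s < t :=
  ((strictMonoOn_fm (by omega)).lt_iff_lt hs ht.le).1 (h.trans_lt (fm_lt_fm_of_lt hm hmn ht))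

lemma tendsto_half_of_fm_eq_one {γ : ℕ → ℝ} (h_nonneg : ∀ᶠ m in atTop, 0 ≤ γ m)
    (h_root : ∀ᶠ m in atTop, fm m (γ m) = 1) : Tendsto γ atTop (𝓝 (1 / 2)) := by
  refine tendsto_of_monotoneOn_of_eventually_lt (f := fm) ?_ h_nonneg
    (Set.Ici_subset_Ici.2 one_half_pos.le) ?_ fun t ht ↦ ?_
  · filter_upwards [eventually_ge_atTop 2] with m hm using (strictMonoOn_fm hm).monotoneOn
  · filter_upwards [h_root] with m hm using hm ▸ fm_half_lt_one m
  · filter_upwards [h_root, eventually_one_lt_fm ht] with m hm hlt using hm ▸ hlt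

end Roots

theorem stmt_3 (γ : ℕ → ℝ)
    (hγ : ∀ m : ℕ, 3 ≤ m → γ m ∈ Set.Ioo (0 : ℝ) 1 ∧ fm m (γ m) = 1) :
    (∀ m : ℕ, 3 ≤ m → 1 < fm m 1) ∧
    (∀ m : ℕ, 3 ≤ m → ∃! g : ℝ, g ∈ Set.Ioo (0 : ℝ) 1 ∧ fm m g = 1) ∧
    (∀ m : ℕ, 3 ≤ m → 1 / 2 < γ (m + 1) ∧ γ (m + 1) < γ m) ∧
    Filter.Tendsto γ Filter.atTop (nhds (1 / 2)) := by
  have h_pos : ∀ m, 3 ≤ m → 0 < γ m := fun m hm ↦ (hγ m hm).1.1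
  have h_root : ∀ m, 3 ≤ m → fm m (γ m) = 1 := fun m hm ↦ (hγ m hm).2
  refine ⟨fun m ↦ one_lt_fm_one, fun m ↦ existsUnique_fm_eq_one, fun m hm ↦ ⟨?_, ?_⟩, ?_⟩
  · have hm' : 3 ≤ m + 1 := by omega
    exact half_lt_of_fm_eq_one (by omega) (h_pos _ hm').le (h_root _ hm')
  · have hm' : 3 ≤ m + 1 := by omega
    exact lt_of_fm_eq_fm (by omega) m.lt_succ_self (h_pos _ hm').le (h_pos m hm)
      ((h_root _ hm').trans (h_root m hm).symm)
  · have h_large : ∀ᶠ m : ℕ in atTop, 3 ≤ m := eventually_ge_atTop 3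
    exact tendsto_half_of_fm_eq_one (h_large.mono fun m hm ↦ (h_pos m hm).le)
      (h_large.mono h_root)
end

section
/- Let m ≥ 2 be an integer and let (a_α)_{|α| ≤ m−1} be complex numbers with a_{g₀} real and a_{g₀} ≥ 0. Set p(S) := ∑_{|α| ≤ m−1} a_α S_α, a bounded operator on ℓ²(𝔽ₙ⁺). If Re p(S) ≤ I, then ∑_{|α| ≤ m−1} |a_α| r_α ≤ 1 for every tuple r = (r₁,…,rₙ) of nonnegative reals with ‖r‖₂ ≤ t_m. -/
open scoped BigOperators

/-- The full Fock space, identified with `ℓ²(𝔽ₙ⁺)` where the free monoid `𝔽ₙ⁺` on `n`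
generators is identified with `List (Fin n)`. -/
noncomputable abbrev Fock (n : ℕ) : Type := lp (fun _ : List (Fin n) => ℂ) 2

/-- The orthonormal basis vector `e_α` of the Fock space. -/
noncomputable def fockBasis (n : ℕ) (α : List (Fin n)) : Fock n := lp.single 2 α 1

/-- For a word `α = g_{i₁} ⋯ g_{i_k}`, the product `T_α = T_{i₁} ⋯ T_{i_k}` (and `T_{g₀} = 1`). -/
noncomputable def wordProd {n : ℕ} {M : Type*} [Monoid M] (T : Fin n → M)
    (α : List (Fin n)) : M :=
  (α.map T).prod

open Polynomial Filter Topology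
open scoped InnerProductSpace ComplexConjugate

/-!
Let `P` be the degree `k` part of `p(S)`, `e` the vacuum and `B = P / ‖P e‖`. The vectors
`e, B e, B² e, …` are orthonormal, and the compression of `p(S)` to their span is a lower
triangular Toeplitz matrix whose symbol is a polynomial `F` of degree at most `⌊(m - 1) / k⌋` with
`F(0) = a_{g₀}` and linear coefficient `‖P e‖`. Testing `Re p(S) ≤ I` on `∑_{j < L} B^j e` bounds
Cesàro means of partial sums that are eventually `Re F(1)`, so `Re F(1) ≤ 1`; multiplying `B` by
unimodular scalars gives `Re F ≤ 1` on the circle.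

Fejér's inequality then bounds the linear coefficient by `2 (1 - a_{g₀}) cos (π / (N + 2))`,
`N = ⌊(m - 1) / k⌋`. It comes from the quadrature formula at the roots of `z ^ (N + 2) = -1`, where
`cos (π / (N + 2)) - Re z` is nonnegative. Finally Cauchy–Schwarz in each degree bounds the sum by
`a_{g₀} + 2 (1 - a_{g₀}) f_m(t)`, which is at most `1` when `f_m(t) ≤ 1 / 2`.
-/

section Fejer

theorem sum_eval_mul_primitiveRoot_pow {R : Type*} [CommRing R] [IsDomain R] {ζ : R} {M : ℕ}
    (hζ : IsPrimitiveRoot ζ M) (c : R) {Q : R[X]} (hQ : Q.natDegree < M) :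
    ∑ l ∈ Finset.range M, Q.eval (c * ζ ^ l) = M * Q.coeff 0 := by
  have geom_sum_eq_zero : ∀ s < M, s ≠ 0 → ∑ l ∈ Finset.range M, (ζ ^ s) ^ l = 0 := by
    intro s hsM hs
    have hne : ζ ^ s - 1 ≠ 0 := sub_ne_zero.2 (hζ.pow_ne_one_of_pos_of_lt hs hsM)
    refine (mul_eq_zero.1 ?_).resolve_right hne
    rw [geom_sum_mul, pow_right_comm, hζ.pow_eq_one, one_pow, sub_self]
  simp only [eval_eq_sum_range' hQ]
  rw [Finset.sum_comm, Finset.sum_eq_single_of_mem 0 (Finset.mem_range.2 (by omega))]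
  · simp
  · intro s hs hs0
    calc ∑ l ∈ Finset.range M, Q.coeff s * (c * ζ ^ l) ^ s
        = Q.coeff s * c ^ s * ∑ l ∈ Finset.range M, (ζ ^ s) ^ l := by
          rw [Finset.mul_sum]
          exact Finset.sum_congr rfl fun l _ => by rw [mul_pow, pow_right_comm ζ l, mul_assoc]
      _ = 0 := by rw [geom_sum_eq_zero s (Finset.mem_range.1 hs) hs0, mul_zero]

theorem norm_eq_one_of_pow_eq_neg_one {z : ℂ} {M : ℕ} (hM : M ≠ 0) (hz : z ^ M = -1) :
    ‖z‖ = 1 := by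
  rw [← pow_eq_one_iff_of_nonneg (norm_nonneg z) hM, ← norm_pow, hz, norm_neg, norm_one]

theorem re_le_cos_pi_div_of_pow_eq_neg_one {z : ℂ} {M : ℕ} (hM : M ≠ 0) (hz : z ^ M = -1) :
    z.re ≤ Real.cos (Real.pi / M) := by
  have hnorm : ‖z‖ = 1 := norm_eq_one_of_pow_eq_neg_one hM hz
  have hre : z.re = Real.cos |z.arg| := by
    rw [Real.cos_abs, Complex.cos_arg (norm_ne_zero_iff.1 (by simp [hnorm])), hnorm, div_one]
  have hcos : Real.cos (M * |z.arg|) = -1 := by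
    have hpolar : z = Complex.exp (z.arg * Complex.I) := by
      simpa [hnorm] using (Complex.norm_mul_exp_arg_mul_I z).symm
    rw [← Nat.abs_cast, ← abs_mul, Real.cos_abs, ← Complex.exp_ofReal_mul_I_re]
    push_cast
    rw [mul_assoc, Complex.exp_nat_mul, ← hpolar, hz, Complex.neg_re, Complex.one_re]
  have hMpos : (0 : ℝ) < M := by positivity
  have harg : Real.pi / M ≤ |z.arg| := by
    by_contra! hlt
    rw [lt_div_iff₀' hMpos] at hlt
    have heq := Real.injOn_cos ⟨by positivity, hlt.le⟩ ⟨Real.pi_pos.le, le_rfl⟩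
      (hcos.trans Real.cos_pi.symm)
    exact hlt.ne heq
  rw [hre]
  exact Real.cos_le_cos_of_nonneg_of_le_pi (by positivity) (Complex.abs_arg_le_pi z) harg

theorem exists_quadrature_pow_eq_neg_one {M : ℕ} (hM : M ≠ 0) :
    ∃ z : ℕ → ℂ, (∀ l, z l ^ M = -1) ∧
      ∀ Q : ℂ[X], Q.natDegree < M → ∑ l ∈ Finset.range M, Q.eval (z l) = M * Q.coeff 0 := by
  have hζ := Complex.isPrimitiveRoot_exp M hM
  refine ⟨fun l => Complex.exp (Real.pi * Complex.I / M) *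
    Complex.exp (2 * Real.pi * Complex.I / M) ^ l, fun l => ?_,
    fun Q hQ => sum_eval_mul_primitiveRoot_pow hζ _ hQ⟩
  rw [mul_pow, pow_right_comm, hζ.pow_eq_one, one_pow, mul_one, ← Complex.exp_nat_mul,
    mul_div_cancel₀ _ (Nat.cast_ne_zero.2 hM), Complex.exp_pi_mul_I]

theorem re_mul_re_eval_of_norm_eq_one {z : ℂ} (hz : ‖z‖ = 1) (F : ℂ[X]) :
    z.re * (F.eval z).re =
      (((X * F).eval z).re + (F.divX.eval z).re + (F.coeff 0 * conj z).re) / 2 := by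
  have hunit : z * conj z = 1 := by rw [Complex.mul_conj', hz]; norm_num
  have hconj : conj z * F.eval z = F.divX.eval z + F.coeff 0 * conj z := by
    conv_lhs => rw [← divX_mul_X_add F]
    simp only [eval_add, eval_mul, eval_X, eval_C]
    linear_combination F.divX.eval z * hunit
  have hre := congr_arg Complex.re hconj
  simp only [eval_mul, eval_X, Complex.add_re, Complex.mul_re, Complex.conj_re,
    Complex.conj_im] at hre ⊢
  linarith

theorem sum_re_eval_of_quadrature {M : ℕ} {z : ℕ → ℂ}
    (quadrature : ∀ Q : ℂ[X], Q.natDegree < M →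
      ∑ l ∈ Finset.range M, Q.eval (z l) = M * Q.coeff 0)
    {Q : ℂ[X]} (hQ : Q.natDegree < M) :
    ∑ l ∈ Finset.range M, (Q.eval (z l)).re = M * (Q.coeff 0).re := by
  rw [← Complex.re_sum, quadrature Q hQ, ← Complex.ofReal_natCast, Complex.re_ofReal_mul]

theorem sum_nodes_of_quadrature {M : ℕ} {z : ℕ → ℂ}
    (quadrature : ∀ Q : ℂ[X], Q.natDegree < M →
      ∑ l ∈ Finset.range M, Q.eval (z l) = M * Q.coeff 0) (hM : 1 < M) :
    ∑ l ∈ Finset.range M, z l = 0 := by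
  simpa using quadrature X (by rwa [natDegree_X])

theorem sum_re_mul_re_eval_of_quadrature {M : ℕ} {z : ℕ → ℂ} (hz : ∀ l, ‖z l‖ = 1)
    (quadrature : ∀ Q : ℂ[X], Q.natDegree < M →
      ∑ l ∈ Finset.range M, Q.eval (z l) = M * Q.coeff 0)
    {F : ℂ[X]} (hF : F.natDegree + 1 < M) :
    ∑ l ∈ Finset.range M, (z l).re * (F.eval (z l)).re = M * (F.coeff 1).re / 2 := by
  have degree_X_mul : (X * F).natDegree < M := by
    grw [natDegree_mul_le, natDegree_X_le]
    omega
  have degree_divX : F.divX.natDegree < M := by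
    grw [natDegree_divX_le]
    omega
  have sum_conj : ∑ l ∈ Finset.range M, (F.coeff 0 * conj (z l)).re = 0 := by
    rw [← Complex.re_sum, ← Finset.mul_sum, ← map_sum,
      sum_nodes_of_quadrature quadrature (by omega), map_zero, mul_zero, Complex.zero_re]
  simp only [re_mul_re_eval_of_norm_eq_one (hz _)]
  rw [← Finset.sum_div, Finset.sum_add_distrib, Finset.sum_add_distrib, sum_conj,
    sum_re_eval_of_quadrature quadrature degree_X_mul,
    sum_re_eval_of_quadrature quadrature degree_divX, coeff_divX, coeff_X_mul_zero,
    Complex.zero_re, mul_zero, zero_add, add_zero, zero_add]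

theorem neg_re_coeff_one_le_of_re_eval_le_one {N : ℕ} {F : ℂ[X]} (hdeg : F.natDegree ≤ N)
    (hF : ∀ z : ℂ, ‖z‖ = 1 → (F.eval z).re ≤ 1) :
    -(F.coeff 1).re ≤ 2 * (1 - (F.coeff 0).re) * Real.cos (Real.pi / ((N + 2 : ℕ) : ℝ)) := by
  set M := N + 2
  set c := Real.cos (Real.pi / (M : ℝ))
  have hM : M ≠ 0 := by omega
  obtain ⟨z, hz, quadrature⟩ := exists_quadrature_pow_eq_neg_one hM
  have hnorm l : ‖z l‖ = 1 := norm_eq_one_of_pow_eq_neg_one hM (hz l)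
  -- The weight `c - Re z` changes sign on the circle, but not on the nodes.
  have weighted_nonneg : 0 ≤ ∑ l ∈ Finset.range M, (c - (z l).re) * (1 - (F.eval (z l)).re) :=
    Finset.sum_nonneg fun l _ => mul_nonneg
      (sub_nonneg.2 (re_le_cos_pi_div_of_pow_eq_neg_one hM (hz l)))
      (sub_nonneg.2 (hF _ (hnorm l)))
  have weighted_eq : ∑ l ∈ Finset.range M, (c - (z l).re) * (1 - (F.eval (z l)).re) =
      M / 2 * (2 * (1 - (F.coeff 0).re) * c + (F.coeff 1).re) := by
    simp only [sub_mul, mul_sub, mul_one, Finset.sum_sub_distrib, ← Finset.mul_sum]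
    rw [← Complex.re_sum, sum_nodes_of_quadrature quadrature (by omega),
      sum_re_mul_re_eval_of_quadrature hnorm quadrature (by omega),
      sum_re_eval_of_quadrature quadrature (by omega), Finset.sum_const, Finset.card_range,
      nsmul_eq_mul, Complex.zero_re]
    ring
  rw [weighted_eq] at weighted_nonneg
  have hMpos : (0 : ℝ) < M / 2 := by positivity
  linarith [nonneg_of_mul_nonneg_right weighted_nonneg hMpos]

theorem norm_coeff_one_le_of_re_eval_le_one {N : ℕ} {F : ℂ[X]} (hdeg : F.natDegree ≤ N)
    (hF : ∀ z : ℂ, ‖z‖ = 1 → (F.eval z).re ≤ 1) :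
    ‖F.coeff 1‖ ≤ 2 * (1 - (F.coeff 0).re) * Real.cos (Real.pi / ((N + 2 : ℕ) : ℝ)) := by
  obtain ⟨u, hu, hmul⟩ := Complex.exists_norm_eq_mul_self (-F.coeff 1)
  have hrot := neg_re_coeff_one_le_of_re_eval_le_one (F := F.comp (C u * X)) (N := N)
    (by grw [natDegree_comp_le, natDegree_C_mul_le, natDegree_X_le, mul_one, hdeg])
    fun z hz => by simpa using hF (u * z) (by rw [norm_mul, hu, hz, one_mul])
  have hcoeff : ‖F.coeff 1‖ = -((F.comp (C u * X)).coeff 1).re := by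
    rw [comp_C_mul_X_coeff, pow_one, ← Complex.neg_re, ← neg_mul, mul_comm, ← hmul,
      Complex.ofReal_re, norm_neg]
  simpa [hcoeff] using hrot

end Fejer

section Toeplitz

variable {E : Type*} [NormedAddCommGroup E] [InnerProductSpace ℂ E]

theorem re_le_one_of_tendsto_sum_toeplitz {v : ℕ → E} (hv : Orthonormal ℂ v) {T : E →ₗ[ℂ] E}
    (hT : ∀ x, (⟪x, T x⟫_ℂ).re ≤ ‖x‖ ^ 2) {A : ℕ → ℂ}
    (hA : ∀ i j, ⟪v i, T (v j)⟫_ℂ = if j ≤ i then A (i - j) else 0) {b : ℂ}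
    (hb : Tendsto (fun i => ∑ s ∈ Finset.range i, A s) atTop (𝓝 b)) : b.re ≤ 1 := by
  have quadratic_form_eq (L : ℕ) :
      ⟪∑ j ∈ Finset.range L, v j, T (∑ j ∈ Finset.range L, v j)⟫_ℂ =
        ∑ i ∈ Finset.range L, ∑ s ∈ Finset.range (i + 1), A s := by
    simp only [map_sum, sum_inner, inner_sum, hA]
    rw [Finset.sum_comm]
    refine Finset.sum_congr rfl fun i hi => ?_
    rw [← Finset.sum_filter, ← Finset.sum_range_reflect]
    exact Finset.sum_congr (by grind) fun j _ => by congr 1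
  have norm_sq_eq (L : ℕ) : ‖∑ j ∈ Finset.range L, v j‖ ^ 2 = L := by
    rw [← inner_self_eq_norm_sq (𝕜 := ℂ)]
    simpa using congr_arg Complex.re (hv.inner_sum (fun _ => 1) (fun _ => 1) (Finset.range L))
  have hcesaro := ((Complex.continuous_re.tendsto b).comp
    ((tendsto_add_atTop_iff_nat 1).2 hb)).cesaro
  refine le_of_tendsto' hcesaro fun L => ?_
  calc (L : ℝ)⁻¹ * ∑ i ∈ Finset.range L, (∑ s ∈ Finset.range (i + 1), A s).re
      = (L : ℝ)⁻¹ * (⟪∑ j ∈ Finset.range L, v j, T (∑ j ∈ Finset.range L, v j)⟫_ℂ).re := by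
        rw [quadratic_form_eq, Complex.re_sum]
    _ ≤ (L : ℝ)⁻¹ * L := by
        gcongr
        exact (hT _).trans_eq (norm_sq_eq L)
    _ ≤ 1 := inv_mul_le_one

end Toeplitz

section Words

theorem wordProd_append {n : ℕ} {M : Type*} [Monoid M] (T : Fin n → M) (α β : List (Fin n)) :
    wordProd T (α ++ β) = wordProd T α * wordProd T β := by
  simp [wordProd]

theorem sum_wordProd_pow {n : ℕ} {R : Type*} [CommSemiring R] (r : Fin n → R) (j k : ℕ) :
    ∑ w : Fin k → Fin n, wordProd r (List.ofFn w) ^ j = (∑ i, r i ^ j) ^ k := by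
  simp only [Fintype.sum_pow, wordProd, List.map_ofFn, List.prod_ofFn, Finset.prod_pow,
    Function.comp_apply]

variable {n : ℕ} {𝕜 A : Type*} [CommSemiring 𝕜] [Semiring A] [Algebra 𝕜 A] (S : Fin n → A)

variable (𝕜) in
/-- The homogeneous polynomials of degree `k` in the noncommuting elements `S i`. Encoding them as
a power of the span of the generators makes products and powers land in the right degree. -/
def homogeneousSpan (k : ℕ) : Submodule 𝕜 A :=
  Submodule.span 𝕜 (Set.range S) ^ k

theorem one_mem_homogeneousSpan_zero : 1 ∈ homogeneousSpan 𝕜 S 0 := by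
  rw [homogeneousSpan, pow_zero]
  exact Submodule.one_le.1 le_rfl

variable {S} in
theorem mul_mem_homogeneousSpan {k l : ℕ} {X Y : A} (hX : X ∈ homogeneousSpan 𝕜 S k)
    (hY : Y ∈ homogeneousSpan 𝕜 S l) : X * Y ∈ homogeneousSpan 𝕜 S (k + l) := by
  rw [homogeneousSpan, pow_add]
  exact Submodule.mul_mem_mul hX hY

variable {S} in
theorem pow_mem_homogeneousSpan {k : ℕ} {X : A} (hX : X ∈ homogeneousSpan 𝕜 S k) (j : ℕ) :
    X ^ j ∈ homogeneousSpan 𝕜 S (k * j) := by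
  rw [homogeneousSpan, pow_mul]
  exact Submodule.pow_mem_pow _ hX j

theorem homogeneousSpan_eq_span_wordProd (k : ℕ) :
    homogeneousSpan 𝕜 S k =
      Submodule.span 𝕜 (Set.range fun w : Fin k → Fin n => wordProd S (List.ofFn w)) := by
  rw [homogeneousSpan, Submodule.span_pow]
  congr 1
  ext X
  simp only [Set.mem_pow, Set.mem_range, wordProd, List.map_ofFn]
  constructor
  · rintro ⟨f, rfl⟩
    choose w hw using fun i => (f i).2
    exact ⟨w, by simp [Function.comp_def, hw]⟩
  · rintro ⟨w, rfl⟩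
    exact ⟨fun i => ⟨S (w i), w i, rfl⟩, rfl⟩

/-- The degree `k` part `∑_{|α| = k} a_α S_α` of the noncommutative polynomial with coefficients
`a`; words of length `k` are written `List.ofFn w` with `w : Fin k → Fin n`. -/
noncomputable def homPart (a : List (Fin n) → 𝕜) (k : ℕ) : A :=
  ∑ w : Fin k → Fin n, a (List.ofFn w) • wordProd S (List.ofFn w)

theorem homPart_mem_homogeneousSpan (a : List (Fin n) → 𝕜) (k : ℕ) :
    homPart S a k ∈ homogeneousSpan 𝕜 S k := by
  rw [homogeneousSpan_eq_span_wordProd]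
  exact Submodule.sum_mem _ fun w _ => Submodule.smul_mem _ _ (Submodule.subset_span ⟨w, rfl⟩)

theorem homogeneousSpan_le_span_wordProd (k : ℕ) :
    homogeneousSpan 𝕜 S k ≤ Submodule.span 𝕜 (Set.range (wordProd S)) := by
  rw [homogeneousSpan_eq_span_wordProd]
  exact Submodule.span_mono (Set.range_comp_subset_range List.ofFn (wordProd S))

end Words

variable {n : ℕ} {E : Type*} [NormedAddCommGroup E] [InnerProductSpace ℂ E]
  {S : Fin n → E →L[ℂ] E} {e f : E}

/-- `e` is a unit wandering vector for the tuple `S`: the orbit `S_α e` over all words `α` is an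
orthonormal family. The vacuum vector of the Fock space under the left creation operators is the
model case. -/
def IsWandering (S : Fin n → E →L[ℂ] E) (e : E) : Prop :=
  Orthonormal ℂ fun α : List (Fin n) => wordProd S α e

namespace IsWandering

theorem norm_eq_one (he : IsWandering S e) : ‖e‖ = 1 := by
  simpa [wordProd] using he.1 []

theorem inner_wordProd (he : IsWandering S e) (α β : List (Fin n)) :
    ⟪wordProd S α e, wordProd S β e⟫_ℂ = if α = β then 1 else 0 :=
  orthonormal_iff_ite.1 he α β

theorem inner_apply_eq_inner_apply (he : IsWandering S e) (hf : IsWandering S f) {X Y : E →L[ℂ] E}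
    (hX : X ∈ Submodule.span ℂ (Set.range (wordProd S)))
    (hY : Y ∈ Submodule.span ℂ (Set.range (wordProd S))) :
    ⟪X e, Y e⟫_ℂ = ⟪X f, Y f⟫_ℂ := by
  obtain ⟨x, rfl⟩ := Finsupp.mem_span_range_iff_exists_finsupp.1 hX
  obtain ⟨y, rfl⟩ := Finsupp.mem_span_range_iff_exists_finsupp.1 hY
  have apply_eq (c : List (Fin n) →₀ ℂ) (u : E) : (c.sum fun α z => z • wordProd S α) u =
      Finsupp.linearCombination ℂ (fun α => wordProd S α u) c := by
    simp [Finsupp.linearCombination_apply, Finsupp.sum, sum_apply]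
  simp only [apply_eq]
  exact (Orthonormal.inner_finsupp_eq_sum_left he x y).trans
    (Orthonormal.inner_finsupp_eq_sum_left hf x y).symm

theorem inner_eq_zero_of_ne (he : IsWandering S e) {k l : ℕ} (hkl : k ≠ l) {X Y : E →L[ℂ] E}
    (hX : X ∈ homogeneousSpan ℂ S k) (hY : Y ∈ homogeneousSpan ℂ S l) :
    ⟪X e, Y e⟫_ℂ = 0 := by
  rw [homogeneousSpan_eq_span_wordProd] at hX hY
  obtain ⟨x, rfl⟩ := (Submodule.mem_span_range_iff_exists_fun ℂ).1 hX
  obtain ⟨y, rfl⟩ := (Submodule.mem_span_range_iff_exists_fun ℂ).1 hY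
  have hne (u : Fin k → Fin n) (w : Fin l → Fin n) : List.ofFn u ≠ List.ofFn w :=
    fun h => hkl (by simpa using congr_arg List.length h)
  simp [sum_apply, he.inner_wordProd, hne]

theorem apply_of_mem_homogeneousSpan (he : IsWandering S e) {k : ℕ} {T : E →L[ℂ] E}
    (hT : T ∈ homogeneousSpan ℂ S k) (hTe : ‖T e‖ = 1) : IsWandering S (T e) := by
  rw [homogeneousSpan_eq_span_wordProd] at hT
  obtain ⟨b, rfl⟩ := (Submodule.mem_span_range_iff_exists_fun ℂ).1 hT
  set T := ∑ w, b w • wordProd S (List.ofFn w)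
  have gram (α β : List (Fin n)) :
      ⟪wordProd S α (T e), wordProd S β (T e)⟫_ℂ = if α = β then ∑ w, conj (b w) * b w else 0 := by
    have hiff (u w : Fin k → Fin n) : α ++ List.ofFn u = β ++ List.ofFn w ↔ α = β ∧ u = w := by
      refine ⟨fun h => ?_, by rintro ⟨rfl, rfl⟩; rfl⟩
      simpa [List.ofFn_inj] using List.append_inj' h (by simp)
    simp only [T, sum_apply, smul_apply, map_sum, map_smul,
      ← mul_apply_eq_comp, ← wordProd_append, sum_inner, inner_sum, inner_smul_left,
      inner_smul_right, he.inner_wordProd, hiff]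
    split_ifs with h <;> simp [h, mul_comm]
  have hb : ∑ w, conj (b w) * b w = 1 := by
    simpa [wordProd, hTe] using (gram [] []).symm
  exact orthonormal_iff_ite.2 fun α β => by rw [gram, hb]

theorem pow_apply_of_mem_homogeneousSpan (he : IsWandering S e) {k : ℕ} {T : E →L[ℂ] E}
    (hT : T ∈ homogeneousSpan ℂ S k) (hTe : ‖T e‖ = 1) (j : ℕ) : IsWandering S ((T ^ j) e) := by
  induction j with
  | zero => simpa using he
  | succ j ih =>
    have hnorm : ‖T ((T ^ j) e)‖ = 1 := by
      have hT' := homogeneousSpan_le_span_wordProd S k hT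
      rw [← hTe, ← sq_eq_sq₀ (norm_nonneg _) (norm_nonneg _), ← inner_self_eq_norm_sq (𝕜 := ℂ),
        ← inner_self_eq_norm_sq (𝕜 := ℂ), ih.inner_apply_eq_inner_apply he hT' hT']
    rw [pow_succ']
    exact ih.apply_of_mem_homogeneousSpan hT hnorm

theorem orthonormal_pow_apply (he : IsWandering S e) {k : ℕ} (hk : k ≠ 0) {T : E →L[ℂ] E}
    (hT : T ∈ homogeneousSpan ℂ S k) (hTe : ‖T e‖ = 1) : Orthonormal ℂ fun j : ℕ => (T ^ j) e :=
  ⟨fun j => (he.pow_apply_of_mem_homogeneousSpan hT hTe j).norm_eq_one, fun i j hij =>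
    he.inner_eq_zero_of_ne (by simpa [hk] using hij) (pow_mem_homogeneousSpan hT i)
      (pow_mem_homogeneousSpan hT j)⟩

section Graded

variable {P : ℕ → E →L[ℂ] E} {m k : ℕ}

theorem inner_sum_apply_eq_inner_apply_of_mem (he : IsWandering S e)
    (hP : ∀ d, P d ∈ homogeneousSpan ℂ S d) (hk : k < m) {X : E →L[ℂ] E}
    (hX : X ∈ homogeneousSpan ℂ S k) :
    ⟪X e, (∑ d ∈ Finset.range m, P d) e⟫_ℂ = ⟪X e, P k e⟫_ℂ := by
  rw [sum_apply, inner_sum]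
  exact Finset.sum_eq_single_of_mem k (Finset.mem_range.2 hk) fun d _ hd =>
    he.inner_eq_zero_of_ne hd.symm hX (hP d)

theorem inner_sum_apply_eq_zero_of_mem (he : IsWandering S e)
    (hP : ∀ d, P d ∈ homogeneousSpan ℂ S d) (hk : m ≤ k) {X : E →L[ℂ] E}
    (hX : X ∈ homogeneousSpan ℂ S k) : ⟪X e, (∑ d ∈ Finset.range m, P d) e⟫_ℂ = 0 := by
  rw [sum_apply, inner_sum]
  exact Finset.sum_eq_zero fun d hd =>
    he.inner_eq_zero_of_ne ((Finset.mem_range.1 hd).trans_le hk).ne' hX (hP d)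

theorem inner_pow_apply_sum_apply_pow_apply_eq_ite (he : IsWandering S e)
    (hP : ∀ d, P d ∈ homogeneousSpan ℂ S d) (hk : k ≠ 0) {T : E →L[ℂ] E}
    (hT : T ∈ homogeneousSpan ℂ S k) (hTe : ‖T e‖ = 1) (i j : ℕ) :
    ⟪(T ^ i) e, (∑ d ∈ Finset.range m, P d) ((T ^ j) e)⟫_ℂ =
      if j ≤ i then ⟪(T ^ (i - j)) e, (∑ d ∈ Finset.range m, P d) e⟫_ℂ else 0 := by
  split_ifs with hji
  · have hp : ∑ d ∈ Finset.range m, P d ∈ Submodule.span ℂ (Set.range (wordProd S)) :=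
      Submodule.sum_mem _ fun d _ => homogeneousSpan_le_span_wordProd S d (hP d)
    have hTs := homogeneousSpan_le_span_wordProd S _ (pow_mem_homogeneousSpan hT (i - j))
    rw [he.inner_apply_eq_inner_apply (he.pow_apply_of_mem_homogeneousSpan hT hTe j) hTs hp,
      ← mul_apply_eq_comp (T ^ (i - j)), pow_sub_mul_pow T hji]
  · rw [← mul_apply_eq_comp, Finset.sum_mul, sum_apply, inner_sum]
    refine Finset.sum_eq_zero fun d _ => he.inner_eq_zero_of_ne ?_ (pow_mem_homogeneousSpan hT i)
      (mul_mem_homogeneousSpan (hP d) (pow_mem_homogeneousSpan hT j))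
    have := Nat.mul_lt_mul_of_pos_left (not_le.1 hji) (Nat.pos_of_ne_zero hk)
    omega

theorem re_sum_inner_pow_apply_le_one (he : IsWandering S e)
    (hP : ∀ d, P d ∈ homogeneousSpan ℂ S d)
    (hre : ∀ x, (⟪x, (∑ d ∈ Finset.range m, P d) x⟫_ℂ).re ≤ ‖x‖ ^ 2) (hk : k ≠ 0)
    {T : E →L[ℂ] E} (hT : T ∈ homogeneousSpan ℂ S k) (hTe : ‖T e‖ = 1) {N : ℕ} (hN : m ≤ k * N) :
    (∑ s ∈ Finset.range N, ⟪(T ^ s) e, (∑ d ∈ Finset.range m, P d) e⟫_ℂ).re ≤ 1 := by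
  refine re_le_one_of_tendsto_sum_toeplitz (he.orthonormal_pow_apply hk hT hTe)
    (A := fun s => ⟪(T ^ s) e, (∑ d ∈ Finset.range m, P d) e⟫_ℂ)
    (T := (∑ d ∈ Finset.range m, P d : E →L[ℂ] E)) hre
    (he.inner_pow_apply_sum_apply_pow_apply_eq_ite hP hk hT hTe)
    (tendsto_atTop_of_eventually_const (i₀ := N) fun i hi => ?_)
  exact Finset.eventually_constant_sum (fun s hs => he.inner_sum_apply_eq_zero_of_mem hP
    (hN.trans (Nat.mul_le_mul_left k hs)) (pow_mem_homogeneousSpan hT s)) hi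

theorem inner_sum_apply_eq_inner_zero_apply (he : IsWandering S e)
    (hP : ∀ d, P d ∈ homogeneousSpan ℂ S d) (hm : 0 < m) :
    ⟪e, (∑ d ∈ Finset.range m, P d) e⟫_ℂ = ⟪e, P 0 e⟫_ℂ :=
  he.inner_sum_apply_eq_inner_apply_of_mem hP hm (X := 1) (one_mem_homogeneousSpan_zero S)

theorem norm_inner_apply_le_of_re_inner_sum_le (he : IsWandering S e)
    (hP : ∀ d, P d ∈ homogeneousSpan ℂ S d)
    (hre : ∀ x, (⟪x, (∑ d ∈ Finset.range m, P d) x⟫_ℂ).re ≤ ‖x‖ ^ 2) (hk : k ≠ 0) (hkm : k < m)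
    {B : E →L[ℂ] E} (hB : B ∈ homogeneousSpan ℂ S k) (hBe : ‖B e‖ = 1) :
    ‖⟪B e, P k e⟫_ℂ‖ ≤ 2 * (1 - (⟪e, P 0 e⟫_ℂ).re) *
      Real.cos (Real.pi / (((m - 1) / k + 2 : ℕ) : ℝ)) := by
  set N := (m - 1) / k with hN
  set F : ℂ[X] :=
    ∑ s ∈ Finset.range (N + 1), monomial s ⟪(B ^ s) e, (∑ d ∈ Finset.range m, P d) e⟫_ℂ with hF
  have coeff_eq (s : ℕ) (hs : s ≤ N) :
      F.coeff s = ⟪(B ^ s) e, (∑ d ∈ Finset.range m, P d) e⟫_ℂ := by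
    simp [F, coeff_monomial, Nat.lt_succ_of_le hs]
  have coeff_zero : F.coeff 0 = ⟪e, P 0 e⟫_ℂ := by
    rw [coeff_eq 0 N.zero_le, pow_zero, one_apply_eq_self,
      he.inner_sum_apply_eq_inner_zero_apply hP (by omega)]
  have coeff_one : F.coeff 1 = ⟪B e, P k e⟫_ℂ := by
    rw [coeff_eq 1 ((Nat.one_le_div_iff (by omega)).2 (by omega)), pow_one,
      he.inner_sum_apply_eq_inner_apply_of_mem hP hkm hB]
  have degree_bound : m ≤ k * (N + 1) := by
    have := Nat.lt_mul_div_succ (m - 1) (Nat.pos_of_ne_zero hk)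
    rw [← hN] at this
    omega
  have re_eval_le (z : ℂ) (hz : ‖z‖ = 1) : (F.eval z).re ≤ 1 := by
    have hnorm : ‖(conj z • B) e‖ = 1 := by simp [norm_smul, hz, hBe]
    convert he.re_sum_inner_pow_apply_le_one hP hre hk (Submodule.smul_mem _ (conj z) hB) hnorm
      degree_bound using 2
    rw [hF, eval_finsetSum]
    refine Finset.sum_congr rfl fun s _ => ?_
    rw [eval_monomial, _root_.smul_pow, smul_apply, inner_smul_left, map_pow, Complex.conj_conj,
      mul_comm]
  have natDegree_le : F.natDegree ≤ N := natDegree_sum_le_of_forall_le _ _ fun s hs =>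
    (natDegree_monomial_le _).trans (Nat.lt_succ_iff.1 (Finset.mem_range.1 hs))
  rw [← coeff_zero, ← coeff_one]
  exact norm_coeff_one_le_of_re_eval_le_one natDegree_le re_eval_le

theorem norm_apply_le_of_re_inner_sum_le (he : IsWandering S e)
    (hP : ∀ d, P d ∈ homogeneousSpan ℂ S d)
    (hre : ∀ x, (⟪x, (∑ d ∈ Finset.range m, P d) x⟫_ℂ).re ≤ ‖x‖ ^ 2) (hk : k ≠ 0) (hkm : k < m) :
    ‖P k e‖ ≤ 2 * (1 - (⟪e, P 0 e⟫_ℂ).re) *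
      Real.cos (Real.pi / (((m - 1) / k + 2 : ℕ) : ℝ)) := by
  rcases eq_or_ne (P k e) 0 with hPk | hPk
  · have hle : (⟪e, P 0 e⟫_ℂ).re ≤ 1 := by
      simpa only [he.inner_sum_apply_eq_inner_zero_apply hP (pos_of_gt hkm), he.norm_eq_one,
        one_pow] using hre e
    have hconst := norm_coeff_one_le_of_re_eval_le_one (F := C ⟪e, P 0 e⟫_ℂ) (N := (m - 1) / k)
      (by rw [natDegree_C]; exact Nat.zero_le _) fun z _ => by rwa [eval_C]
    simpa [hPk] using hconst
  · have hnorm : ‖((‖P k e‖⁻¹ : ℂ) • P k) e‖ = 1 := by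
      simpa using norm_smul_inv_norm (𝕜 := ℂ) hPk
    have hinner : ‖⟪((‖P k e‖⁻¹ : ℂ) • P k) e, P k e⟫_ℂ‖ = ‖P k e‖ := by
      rw [smul_apply, inner_smul_left, norm_mul, inner_self_eq_norm_sq_to_K]
      simp [sq, hPk]
    rw [← hinner]
    exact he.norm_inner_apply_le_of_re_inner_sum_le hP hre hk hkm
      (Submodule.smul_mem _ _ (hP k)) hnorm

end Graded

theorem norm_homPart_apply_sq (he : IsWandering S e) (a : List (Fin n) → ℂ) (k : ℕ) :
    ‖homPart S a k e‖ ^ 2 = ∑ w : Fin k → Fin n, ‖a (List.ofFn w)‖ ^ 2 := by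
  have hort : Orthonormal ℂ fun w : Fin k → Fin n => wordProd S (List.ofFn w) e :=
    Orthonormal.comp he List.ofFn List.ofFn_injective
  have hinner := hort.inner_sum (a ∘ List.ofFn) (a ∘ List.ofFn) Finset.univ
  simp only [Function.comp_apply, Complex.conj_mul'] at hinner
  rw [← inner_self_eq_norm_sq (𝕜 := ℂ), homPart]
  simp only [sum_apply, smul_apply]
  rw [hinner]
  norm_cast

theorem sum_norm_mul_wordProd_le (he : IsWandering S e) (a : List (Fin n) → ℂ) (k : ℕ)
    (r : Fin n → ℝ) :
    ∑ w : Fin k → Fin n, ‖a (List.ofFn w)‖ * wordProd r (List.ofFn w) ≤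
      ‖homPart S a k e‖ * Real.sqrt (∑ i, r i ^ 2) ^ k := by
  have sqrt_pow_eq : Real.sqrt ((∑ i, r i ^ 2) ^ k) = Real.sqrt (∑ i, r i ^ 2) ^ k := by
    rw [Real.sqrt_eq_iff_eq_sq (by positivity) (by positivity), pow_right_comm,
      Real.sq_sqrt (by positivity)]
  calc ∑ w : Fin k → Fin n, ‖a (List.ofFn w)‖ * wordProd r (List.ofFn w)
      ≤ Real.sqrt (∑ w : Fin k → Fin n, ‖a (List.ofFn w)‖ ^ 2) *
          Real.sqrt (∑ w : Fin k → Fin n, wordProd r (List.ofFn w) ^ 2) :=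
        Real.sum_mul_le_sqrt_mul_sqrt ..
    _ = ‖homPart S a k e‖ * Real.sqrt (∑ i, r i ^ 2) ^ k := by
        rw [← he.norm_homPart_apply_sq, Real.sqrt_sq (norm_nonneg _), sum_wordProd_pow,
          sqrt_pow_eq]

theorem inner_homPart_zero_apply (he : IsWandering S e) (a : List (Fin n) → ℂ) :
    ⟪e, homPart S a 0 e⟫_ℂ = a [] := by
  simp [homPart, wordProd, he.norm_eq_one]

theorem sum_norm_mul_wordProd_le_of_re_inner_sum_le (he : IsWandering S e) {m : ℕ}
    {a : List (Fin n) → ℂ}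
    (hre : ∀ x, (⟪x, (∑ k ∈ Finset.range m, homPart S a k) x⟫_ℂ).re ≤ ‖x‖ ^ 2)
    {k : ℕ} (hk : k ≠ 0) (hkm : k < m) {t : ℝ} {r : Fin n → ℝ}
    (hr : Real.sqrt (∑ i, r i ^ 2) ≤ t) :
    ∑ w : Fin k → Fin n, ‖a (List.ofFn w)‖ * wordProd r (List.ofFn w) ≤
      2 * (1 - (a []).re) * (t ^ k * Real.cos (Real.pi / (((m - 1) / k + 2 : ℕ) : ℝ))) := by
  have hcoeff := he.norm_apply_le_of_re_inner_sum_le (homPart_mem_homogeneousSpan S a) hre hk hkm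
  rw [he.inner_homPart_zero_apply] at hcoeff
  calc ∑ w : Fin k → Fin n, ‖a (List.ofFn w)‖ * wordProd r (List.ofFn w)
      ≤ ‖homPart S a k e‖ * Real.sqrt (∑ i, r i ^ 2) ^ k := he.sum_norm_mul_wordProd_le a k r
    _ ≤ (2 * (1 - (a []).re) * Real.cos (Real.pi / (((m - 1) / k + 2 : ℕ) : ℝ))) * t ^ k := by
      gcongr
      exact (norm_nonneg _).trans hcoeff
    _ = 2 * (1 - (a []).re) * (t ^ k * Real.cos (Real.pi / (((m - 1) / k + 2 : ℕ) : ℝ))) := by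
      ring

end IsWandering

theorem re_inner_apply_le_of_re_le_one {H : Type*} [NormedAddCommGroup H] [InnerProductSpace ℂ H]
    [CompleteSpace H] {T : H →L[ℂ] H}
    (hT : (2 : ℂ)⁻¹ • (T + ContinuousLinearMap.adjoint T) ≤ 1) (x : H) :
    (⟪x, T x⟫_ℂ).re ≤ ‖x‖ ^ 2 := by
  have hpos : 0 ≤ (⟪x, (1 - (2 : ℂ)⁻¹ • (T + ContinuousLinearMap.adjoint T)) x⟫_ℂ).re :=
    ((ContinuousLinearMap.le_def _ _).1 hT).re_inner_nonneg_right x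
  have re_part_eq : (⟪x, ((2 : ℂ)⁻¹ • (T + ContinuousLinearMap.adjoint T)) x⟫_ℂ).re =
      (⟪x, T x⟫_ℂ).re := by
    rw [smul_apply, add_apply, inner_smul_right, inner_add_right,
      ContinuousLinearMap.adjoint_inner_right, ← inner_conj_symm (T x) x, Complex.add_conj]
    simp
  rw [sub_apply, one_apply_eq_self, inner_sub_right, Complex.sub_re, re_part_eq] at hpos
  rw [← inner_self_eq_norm_sq (𝕜 := ℂ)]
  exact sub_nonneg.1 hpos

theorem orthonormal_fockBasis (n : ℕ) : Orthonormal ℂ (fockBasis n) := by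
  refine orthonormal_iff_ite.2 fun α β => ?_
  rw [fockBasis, fockBasis, lp.inner_single_left, lp.single_apply]
  by_cases h : α = β <;> simp [h]

theorem wordProd_fockBasis_nil {n : ℕ} {S : Fin n → Fock n →L[ℂ] Fock n}
    (hS : ∀ i α, S i (fockBasis n α) = fockBasis n (i :: α)) (α : List (Fin n)) :
    wordProd S α (fockBasis n []) = fockBasis n α := by
  induction α with
  | nil => simp [wordProd]
  | cons i α ih => rw [← hS, ← ih]; simp [wordProd]

theorem isWandering_fockBasis_nil {n : ℕ} {S : Fin n → Fock n →L[ℂ] Fock n}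
    (hS : ∀ i α, S i (fockBasis n α) = fockBasis n (i :: α)) : IsWandering S (fockBasis n []) := by
  simpa only [IsWandering, wordProd_fockBasis_nil hS] using orthonormal_fockBasis n

theorem stmt_5_general {n : ℕ} {E : Type*} [NormedAddCommGroup E] [InnerProductSpace ℂ E]
    {S : Fin n → E →L[ℂ] E} {e : E} (he : IsWandering S e) (m : ℕ) (a : List (Fin n) → ℂ)
    (ha_im : (a []).im = 0) (ha_nonneg : 0 ≤ (a []).re)
    (hre : ∀ x, (⟪x, (∑ k ∈ Finset.range m, homPart S a k) x⟫_ℂ).re ≤ ‖x‖ ^ 2)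
    {t : ℝ} (ht : fm m t ≤ 1 / 2) (r : Fin n → ℝ) (hr : Real.sqrt (∑ i, r i ^ 2) ≤ t) :
    ∑ k ∈ Finset.range m, ∑ w : Fin k → Fin n,
      ‖a (List.ofFn w)‖ * wordProd r (List.ofFn w) ≤ 1 := by
  rcases Nat.eq_zero_or_pos m with rfl | hm
  · simp
  have hle : (a []).re ≤ 1 := by
    simpa only [he.inner_sum_apply_eq_inner_zero_apply (homPart_mem_homogeneousSpan S a) hm,
      he.inner_homPart_zero_apply, he.norm_eq_one, one_pow] using hre e
  have degree_zero : ∑ w : Fin 0 → Fin n, ‖a (List.ofFn w)‖ * wordProd r (List.ofFn w) =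
      (a []).re := by
    simpa [wordProd] using
      (Complex.re_eq_norm.2 (Complex.nonneg_iff.2 ⟨ha_nonneg, ha_im.symm⟩)).symm
  have range_eq : Finset.range m = insert 0 (Finset.Icc 1 (m - 1)) := by grind
  calc ∑ k ∈ Finset.range m, ∑ w : Fin k → Fin n, ‖a (List.ofFn w)‖ * wordProd r (List.ofFn w)
      ≤ (a []).re + 2 * (1 - (a []).re) * fm m t := by
        rw [range_eq, Finset.sum_insert (by simp), degree_zero, fm, Finset.mul_sum]
        gcongr with k hk
        rw [Finset.mem_Icc] at hk
        exact he.sum_norm_mul_wordProd_le_of_re_inner_sum_le hre (by omega) (by omega) hr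
    _ ≤ (a []).re + 2 * (1 - (a []).re) * (1 / 2) := by
      gcongr
    _ = 1 := by ring

theorem stmt_5 (n : ℕ) (hn : 1 ≤ n) (m : ℕ) (hm : 2 ≤ m)
    (a : List (Fin n) → ℂ) (ha_im : (a []).im = 0) (ha_nonneg : 0 ≤ (a []).re)
    (S : Fin n → Fock n →L[ℂ] Fock n)
    (hS : ∀ (i : Fin n) (α : List (Fin n)), S i (fockBasis n α) = fockBasis n (i :: α))
    (p : Fock n →L[ℂ] Fock n)
    (hp : p = ∑ k ∈ Finset.range m, ∑ w : Fin k → Fin n,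
      a (List.ofFn w) • wordProd S (List.ofFn w))
    (hre : (2 : ℂ)⁻¹ • (p + ContinuousLinearMap.adjoint p) ≤ 1)
    (t : ℝ) (htm : t ∈ Set.Ioc (0 : ℝ) 1) (hts : fm m t = 1 / 2) :
    ∀ r : Fin n → ℝ, (∀ i, 0 ≤ r i) → Real.sqrt (∑ i, r i ^ 2) ≤ t →
      ∑ k ∈ Finset.range m, ∑ w : Fin k → Fin n,
        ‖a (List.ofFn w)‖ * wordProd r (List.ofFn w) ≤ 1 := by
  subst hp
  exact fun r _ => stmt_5_general (isWandering_fockBasis_nil hS) m a ha_im ha_nonneg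
    (re_inner_apply_le_of_re_le_one hre) hts.le r
end

section
/- Let m ≥ 2 be an integer and let p(z) = ∑_{k=0}^{m−1} a_k z^k be a polynomial with complex coefficients such that a₀ is real, a₀ ≥ 0, and Re p(z) ≤ 1 for all z ∈ 𝔻. Then ∑_{k=0}^{m−1} |a_k| r^k ≤ 1 for every r with 0 ≤ r ≤ t_m. -/
open scoped BigOperators

/-!
For a polynomial `q` of degree at most `n` with `0 ≤ Re q` on the unit circle, one has the
Carathéodory-type estimate `‖q_k‖ ≤ 2 Re q_0 cos (π / (⌊n/k⌋ + 2))`. To see this, put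
`M = ⌊n/k⌋ + 2` and average `q` over the roots of `x ^ (k * M) = -1` against the weight
`cos (π / M) - Re (x ^ k)`. The weight is nonnegative because `x ^ k` is an `M`-th root of `-1`,
and `n + k < k * M` makes the average see only the coefficients `q_0` and `q_k`. A rotation turns
`Re q_k` into `‖q_k‖`. Applying the estimate to `q = 1 - p` and summing over `k` bounds
`∑_{k ≥ 1} ‖a_k‖ r ^ k` by `2 (1 - a_0) f_m(r) ≤ 1 - a_0`.
-/

open Complex Polynomial

section RootAverages

variable {F : Type*} [Field F] {ζ b : F} {K : ℕ}

lemma sum_zpow_nthRootsFinset_eq_zero (hζ : IsPrimitiveRoot ζ K) {e : ℤ} (he : ¬ (K : ℤ) ∣ e) :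
    ∑ x ∈ nthRootsFinset K b, x ^ e = 0 := by
  obtain rfl | hK := K.eq_zero_or_pos
  · simp
  have hζ0 : ζ ≠ 0 := hζ.ne_zero hK.ne'
  have hrotate : ∑ x ∈ nthRootsFinset K b, x ^ e = ζ ^ e * ∑ x ∈ nthRootsFinset K b, x ^ e := by
    rw [Finset.mul_sum]
    refine Finset.sum_nbij' (ζ⁻¹ * ·) (ζ * ·) ?_ ?_ ?_ ?_ ?_ <;>
      simp +contextual [mem_nthRootsFinset hK, mul_pow, mul_zpow, hζ.pow_eq_one, hζ0,
        zpow_ne_zero]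
  have hζe : ζ ^ e ≠ 1 := mt (hζ.zpow_eq_one_iff_dvd e).1 he
  exact by_contra fun hsum ↦ hζe ((right_eq_mul₀ hsum).1 hrotate)

lemma sum_inv_pow_mul_eval_nthRootsFinset (hζ : IsPrimitiveRoot ζ K) (hb : b ≠ 0) {q : F[X]}
    (hq : q.natDegree < K) {j : ℕ} (hj : j < K) :
    ∑ x ∈ nthRootsFinset K b, (x ^ j)⁻¹ * q.eval x = (nthRootsFinset K b).card * q.coeff j := by
  have hterm (l : ℕ) (hl : l < K) :
      ∑ x ∈ nthRootsFinset K b, (x ^ j)⁻¹ * (q.coeff l * x ^ l) =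
        if l = j then (nthRootsFinset K b).card * q.coeff j else 0 := by
    have hzpow : ∀ x ∈ nthRootsFinset K b,
        (x ^ j)⁻¹ * (q.coeff l * x ^ l) = q.coeff l * x ^ ((l : ℤ) - j) := fun x hx ↦ by
      rw [zpow_sub₀ (ne_zero_of_mem_nthRootsFinset hb hx), zpow_natCast, zpow_natCast]
      ring
    rw [Finset.sum_congr rfl hzpow, ← Finset.mul_sum]
    split_ifs with hlj
    · simp [hlj, mul_comm]
    · have hndvd : ¬ (K : ℤ) ∣ l - j := fun hdvd ↦
        hlj (by have := Int.eq_zero_of_abs_lt_dvd hdvd (by rw [abs_lt]; omega); omega)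
      rw [sum_zpow_nthRootsFinset_eq_zero hζ hndvd, mul_zero]
  simp_rw [eval_eq_sum_range' hq, Finset.mul_sum]
  rw [Finset.sum_comm, Finset.sum_congr rfl fun l hl ↦ hterm l (Finset.mem_range.1 hl)]
  simp [hj]

end RootAverages

lemma norm_eq_one_of_pow_eq {R : Type*} [NormedDivisionRing R] {x b : R} {n : ℕ}
    (hx : x ^ n = b) (hb : ‖b‖ = 1) (hn : n ≠ 0) : ‖x‖ = 1 := by
  rwa [← pow_eq_one_iff_of_nonneg (norm_nonneg x) hn, ← norm_pow, hx]

lemma re_le_cos_pi_div_of_pow_eq_neg_one_s8 {x : ℂ} {M : ℕ} (hx : x ^ M = -1) :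
    x.re ≤ Real.cos (Real.pi / M) := by
  have hM : M ≠ 0 := by rintro rfl; norm_num at hx
  have hMpos : (0 : ℝ) < M := by positivity
  have hnorm : ‖x‖ = 1 := norm_eq_one_of_pow_eq hx (by simp) hM
  have hexp : exp (x.arg * I) = x := by simpa [hnorm] using norm_mul_exp_arg_mul_I x
  have hcos : Real.cos (M * |x.arg|) = -1 :=
    calc Real.cos (M * |x.arg|) = Real.cos (M * x.arg) := by
          rw [← abs_of_pos hMpos, ← abs_mul, Real.cos_abs, abs_of_pos hMpos]
      _ = (exp (x.arg * I) ^ M).re := by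
          rw [← exp_nat_mul, ← mul_assoc, ← exp_ofReal_mul_I_re, ofReal_mul, ofReal_natCast]
      _ = -1 := by rw [hexp, hx, neg_re, one_re]
  have harg : Real.pi / M ≤ |x.arg| := by
    rw [div_le_iff₀' hMpos]
    by_contra! hlt
    have := Real.cos_lt_cos_of_nonneg_of_le_pi (by positivity) le_rfl hlt
    rw [hcos, Real.cos_pi] at this
    exact lt_irrefl _ this
  calc x.re = Real.cos |x.arg| := by rw [Real.cos_abs, ← norm_mul_cos_arg x, hnorm, one_mul]
    _ ≤ Real.cos (Real.pi / M) :=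
        Real.cos_le_cos_of_nonneg_of_le_pi (by positivity) (abs_arg_le_pi x) harg

lemma sum_sub_re_pow_mul_eval_nthRootsFinset {b : ℂ} (hb : ‖b‖ = 1) {K k : ℕ} (hk : 0 < k)
    {q : ℂ[X]} (hq : q.natDegree + k < K) (c : ℝ) :
    ∑ x ∈ nthRootsFinset K b, ((c - (x ^ k).re : ℝ) : ℂ) * q.eval x =
      (nthRootsFinset K b).card * (c * q.coeff 0 - q.coeff k / 2) := by
  have hb0 : b ≠ 0 := by rintro rfl; simp at hb
  have hζ := isPrimitiveRoot_exp K (by omega)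
  -- On the unit circle `Re (x ^ k) = (x ^ k + (x ^ k)⁻¹) / 2`; the factor `x ^ k` goes into the
  -- polynomial, and `X ^ k * q` has no constant term.
  have hexpand : ∀ x ∈ nthRootsFinset K b, ((c - (x ^ k).re : ℝ) : ℂ) * q.eval x =
      c * ((x ^ 0)⁻¹ * q.eval x) - (1 / 2) * ((x ^ k)⁻¹ * q.eval x) -
        (1 / 2) * ((x ^ 0)⁻¹ * (X ^ k * q).eval x) := fun x hx ↦ by
    have hxnorm : ‖x‖ = 1 :=
      norm_eq_one_of_pow_eq ((mem_nthRootsFinset (by omega) b).1 hx) hb (by omega)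
    rw [Complex.inv_eq_conj (z := x ^ k) (by rw [norm_pow, hxnorm, one_pow])]
    push_cast
    rw [re_eq_add_conj, eval_mul, eval_pow, eval_X]
    ring
  have hdeg : (X ^ k * q).natDegree < K :=
    natDegree_mul_le.trans_lt (by rw [natDegree_X_pow]; omega)
  rw [Finset.sum_congr rfl hexpand, Finset.sum_sub_distrib, Finset.sum_sub_distrib,
    ← Finset.mul_sum, ← Finset.mul_sum, ← Finset.mul_sum,
    sum_inv_pow_mul_eval_nthRootsFinset hζ hb0 (by omega) (by omega),
    sum_inv_pow_mul_eval_nthRootsFinset hζ hb0 (by omega) (by omega),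
    sum_inv_pow_mul_eval_nthRootsFinset hζ hb0 hdeg (by omega),
    coeff_X_pow_mul', if_neg (by omega)]
  ring

lemma exists_norm_eq_one_mul_pow_eq {a b : ℂ} (hab : ‖a‖ = ‖b‖) {k : ℕ} (hk : 0 < k) :
    ∃ u : ℂ, ‖u‖ = 1 ∧ a * u ^ k = b := by
  by_cases ha : a = 0
  · exact ⟨1, norm_one, by simp_all [eq_comm (a := (0 : ℝ))]⟩
  · obtain ⟨u, hu⟩ := IsAlgClosed.exists_pow_nat_eq (b / a) hk
    have hnorm : ‖b / a‖ = 1 := by rw [norm_div, ← hab, div_self (norm_ne_zero_iff.2 ha)]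
    exact ⟨u, norm_eq_one_of_pow_eq hu hnorm hk.ne', by rw [hu, mul_div_cancel₀ b ha]⟩

section NonnegRealPart

variable {q : ℂ[X]} {n : ℕ}

lemma re_coeff_le_of_re_eval_nonneg (hn : q.natDegree ≤ n)
    (hre : ∀ z : ℂ, ‖z‖ = 1 → 0 ≤ (q.eval z).re) {k : ℕ} (hk : 0 < k) :
    (q.coeff k).re ≤ 2 * (q.coeff 0).re * Real.cos (Real.pi / (n / k + 2 : ℕ)) := by
  set M := n / k + 2
  set c := Real.cos (Real.pi / M)
  set S := nthRootsFinset (k * M) (-1 : ℂ)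
  have hnk : n + k < k * M := by
    calc n + k < k * (n / k + 1) + k := by grw [← Nat.lt_mul_div_succ n hk]
      _ = k * M := (mul_add_one k (n / k + 1)).symm
  have hS : ∀ x, x ∈ S ↔ x ^ (k * M) = -1 := fun x ↦ mem_nthRootsFinset (by omega) _
  have hcard : (0 : ℝ) < S.card := by
    obtain ⟨x, hx⟩ := IsAlgClosed.exists_pow_nat_eq (-1 : ℂ) (by omega : 0 < k * M)
    exact_mod_cast Finset.card_pos.2 ⟨x, (hS x).2 hx⟩
  have hweighted : 0 ≤ ∑ x ∈ S, (c - (x ^ k).re) * (q.eval x).re := by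
    refine Finset.sum_nonneg fun x hx ↦ mul_nonneg (sub_nonneg.2 ?_) (hre x ?_)
    · exact re_le_cos_pi_div_of_pow_eq_neg_one_s8 (by rw [← pow_mul, (hS x).1 hx])
    · exact norm_eq_one_of_pow_eq ((hS x).1 hx) (by simp) (by omega)
  have haverage : ∑ x ∈ S, (c - (x ^ k).re) * (q.eval x).re =
      S.card * (c * (q.coeff 0).re - (q.coeff k).re / 2) := by
    simpa [← Complex.ofReal_sub, re_ofReal_mul] using congrArg Complex.re
      (sum_sub_re_pow_mul_eval_nthRootsFinset (b := -1) (by simp) hk (by omega) c)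
  have := nonneg_of_mul_nonneg_right (haverage ▸ hweighted) hcard
  linarith

lemma norm_coeff_le_of_re_eval_nonneg (hn : q.natDegree ≤ n)
    (hre : ∀ z : ℂ, ‖z‖ = 1 → 0 ≤ (q.eval z).re) {k : ℕ} (hk : 0 < k) :
    ‖q.coeff k‖ ≤ 2 * (q.coeff 0).re * Real.cos (Real.pi / (n / k + 2 : ℕ)) := by
  obtain ⟨u, hu, huk⟩ :=
    exists_norm_eq_one_mul_pow_eq (a := q.coeff k) (b := ‖q.coeff k‖) (by simp) hk
  have hdeg : (q.comp (C u * X)).natDegree ≤ n :=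
    calc (q.comp (C u * X)).natDegree ≤ q.natDegree * (C u * X).natDegree := natDegree_comp_le
      _ ≤ n * 1 := Nat.mul_le_mul hn ((natDegree_C_mul_le u X).trans natDegree_X_le)
      _ = n := mul_one n
  have hrotated := re_coeff_le_of_re_eval_nonneg hdeg
    (fun z hz ↦ by simpa using hre (u * z) (by simp [hu, hz])) hk
  simpa [comp_C_mul_X_coeff, huk] using hrotated

end NonnegRealPart

section RealPartBounded

variable {p : ℂ[X]} {n : ℕ} {A : ℝ}

lemma re_eval_le_of_norm_eq_one (hre : ∀ z ∈ Metric.ball (0 : ℂ) 1, (p.eval z).re ≤ A)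
    {z : ℂ} (hz : ‖z‖ = 1) : (p.eval z).re ≤ A := by
  refine le_on_closure hre (by fun_prop) continuousOn_const ?_
  simp [closure_ball (0 : ℂ) one_ne_zero, hz]

lemma norm_coeff_le_of_re_eval_le (hn : p.natDegree ≤ n)
    (hre : ∀ z ∈ Metric.ball (0 : ℂ) 1, (p.eval z).re ≤ A) {k : ℕ} (hk : 0 < k) :
    ‖p.coeff k‖ ≤ 2 * (A - (p.coeff 0).re) * Real.cos (Real.pi / (n / k + 2 : ℕ)) := by
  have hdeg : (C (A : ℂ) - p).natDegree ≤ n :=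
    (natDegree_sub_le _ _).trans (by simpa using hn)
  simpa [coeff_C, hk.ne'] using norm_coeff_le_of_re_eval_nonneg hdeg
    (fun z hz ↦ by simpa using re_eval_le_of_norm_eq_one hre hz) hk

lemma sum_norm_coeff_mul_pow_le_of_re_eval_le {m : ℕ} (hm : p.natDegree < m)
    (hre : ∀ z ∈ Metric.ball (0 : ℂ) 1, (p.eval z).re ≤ A) {r : ℝ} (hr : 0 ≤ r) :
    ∑ k ∈ Finset.range m, ‖p.coeff k‖ * r ^ k ≤
      ‖p.coeff 0‖ + 2 * (A - (p.coeff 0).re) * fm m r := by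
  have hIco : Finset.Icc 1 (m - 1) = Finset.Ico 1 m :=
    Finset.Icc_sub_one_right_eq_Ico_of_not_isMin (not_isMin_iff.2 ⟨_, hm⟩) 1
  rw [Finset.sum_range_eq_add_Ico _ (by omega), pow_zero, mul_one, fm, hIco, Finset.mul_sum]
  gcongr ‖p.coeff 0‖ + ∑ k ∈ _, ?_ with k hk
  have hcoeff := norm_coeff_le_of_re_eval_le (Nat.le_sub_one_of_lt hm) hre (Finset.mem_Ico.1 hk).1
  calc ‖p.coeff k‖ * r ^ k
      ≤ 2 * (A - (p.coeff 0).re) * Real.cos (Real.pi / ((m - 1) / k + 2 : ℕ)) * r ^ k := by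
        gcongr
    _ = _ := by ring

end RealPartBounded

lemma monotoneOn_fm (m : ℕ) : MonotoneOn (fm m) (Set.Ici 0) := by
  intro r hr t _ hrt
  refine Finset.sum_le_sum fun k _ ↦ ?_
  have hcos : 0 ≤ Real.cos (Real.pi / ((m - 1) / k + 2 : ℕ)) := by
    have hangle : 0 ≤ Real.pi / ((m - 1) / k + 2 : ℕ) := by positivity
    refine Real.cos_nonneg_of_neg_pi_div_two_le_of_le (by linarith [Real.pi_pos]) ?_
    gcongr
    exact_mod_cast Nat.le_add_left 2 _
  have := Set.mem_Ici.1 hr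
  gcongr

theorem stmt_8 (m : ℕ) (hm : 2 ≤ m) (a : ℕ → ℂ)
    (ha_im : (a 0).im = 0) (ha_nonneg : 0 ≤ (a 0).re)
    (hre : ∀ z ∈ Metric.ball (0 : ℂ) 1, (∑ k ∈ Finset.range m, a k * z ^ k).re ≤ 1)
    (t : ℝ) (htm : t ∈ Set.Ioc (0 : ℝ) 1) (hts : fm m t = 1 / 2) :
    ∀ r : ℝ, 0 ≤ r → r ≤ t →
      ∑ k ∈ Finset.range m, ‖a k‖ * r ^ k ≤ 1 := by
  intro r hr hrt
  set p : ℂ[X] := ∑ k ∈ Finset.range m, monomial k (a k) with hp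
  have hcoeff : ∀ k < m, p.coeff k = a k := fun k hk ↦ by simp [hp, coeff_monomial, hk]
  have hdeg : p.natDegree < m := Nat.lt_of_le_sub_one (by omega) <|
    natDegree_sum_le_of_forall_le _ _ fun k hk ↦
      (natDegree_monomial_le _).trans (Nat.le_sub_one_of_lt (Finset.mem_range.1 hk))
  have hball : ∀ z ∈ Metric.ball (0 : ℂ) 1, (p.eval z).re ≤ 1 := fun z hz ↦ by
    simpa [hp, eval_finsetSum] using hre z hz
  have ha0 : ‖a 0‖ = (a 0).re := (re_eq_norm.2 (nonneg_iff.2 ⟨ha_nonneg, ha_im.symm⟩)).symm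
  have ha0_le : (a 0).re ≤ 1 := by
    simpa [← coeff_zero_eq_eval_zero, hcoeff 0 (by omega)] using hball 0 (by simp)
  calc ∑ k ∈ Finset.range m, ‖a k‖ * r ^ k
      = ∑ k ∈ Finset.range m, ‖p.coeff k‖ * r ^ k :=
        Finset.sum_congr rfl fun k hk ↦ by rw [hcoeff k (Finset.mem_range.1 hk)]
    _ ≤ (a 0).re + 2 * (1 - (a 0).re) * fm m r := by
        simpa only [hcoeff 0 (by omega), ha0] using
          sum_norm_coeff_mul_pow_le_of_re_eval_le hdeg hball hr
    _ ≤ (a 0).re + 2 * (1 - (a 0).re) * fm m t := by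
        gcongr
        exact monotoneOn_fm m hr (hr.trans hrt) hrt
    _ = 1 := by rw [hts]; ring
end
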